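/- For a tree T_n with n edges, H^0(T_n) ≅ ℤ{n} ⊕ ℤ{n+1} and H^i(T_n) = 0 for i ≠ 0, where ℤ{j} is ℤ concentrated in degree j. -/

import Mathlib

/-- A finite multigraph (possibly with loops and multiple edges), with
vertex type `V` and edges indexed by `Fin n`, edge `e` having endpoints `ends e`. -/
structure OGraph where
  V : Type
  [finV : Fintype V]
  n : ℕ
  ends : Fin n → Sym2 V

attribute [instance] OGraph.finV

namespace OGraph

variable (G : OGraph)

/-- Two vertices are related if some edge in `s` joins them. -/
def rel (s : Finset (Fin G.n)) (u v : G.V) : Prop := ∃ e ∈ s, G.ends e = s(u, v)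

/-- The set of connected components of the spanning subgraph `[G:s]`. -/
def Comp (s : Finset (Fin G.n)) : Type := Quot (G.rel s)

/-- `k(s)`: the number of connected components of the spanning subgraph `[G:s]`. -/
noncomputable def ncomp (s : Finset (Fin G.n)) : ℕ := Nat.card (G.Comp s)

/-- The number of proper colorings of `G` with `m` colors: the value `P_G(m)` of
the chromatic polynomial at the natural number `m`. -/
noncomputable def chromatic (m : ℕ) : ℕ :=
  Nat.card {c : G.V → Fin m // ∀ e u v, G.ends e = s(u, v) → c u ≠ c v}

end OGraph

namespace OGraph

/-- The map on quotients induced by an implication of relations. -/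
def qmap {V : Type} {r r' : V → V → Prop} (h : ∀ u v, r u v → r' u v) :
    Quot r → Quot r' :=
  Quot.lift (Quot.mk r') fun u v huv => Quot.sound (h u v huv)

variable (G : OGraph)

/-- An enhanced state: a subset `s` of the edges together with an assignment of a
color (`1` or `x`; a component is "colored `x`" when the predicate holds) to each
connected component of the spanning subgraph `[G:s]`. -/
abbrev EState := Σ s : Finset (Fin G.n), (G.Comp s → Prop)

/-- `j(S)`: the number of components colored `x` in the enhanced state `S`. -/
noncomputable def jdeg (S : G.EState) : ℕ := Nat.card {k : G.Comp S.1 // S.2 k}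

open Classical in
/-- The enhanced state(s) obtained from `S` by adding the edge `e`: zero if `e`
already belongs to `S` or if the added edge merges two components both colored `x`
(the product `x∗x = 0`); otherwise the enhanced state on `insert e s` whose
coloring is obtained from that of `S` using the product
`1∗1 = 1`, `1∗x = x∗1 = x`. -/
noncomputable def addEdge (S : G.EState) (e : Fin G.n) : G.EState →₀ ℤ :=
  if e ∈ S.1 then 0
  else
    let p : G.Comp S.1 → G.Comp (insert e S.1) :=
      qmap fun _ _ huv => huv.elim fun f hf => ⟨f, Finset.mem_insert_of_mem hf.1, hf.2⟩
    if ∃ k1 k2 : G.Comp S.1, k1 ≠ k2 ∧ p k1 = p k2 ∧ S.2 k1 ∧ S.2 k2 then 0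
    else Finsupp.single ⟨insert e S.1, fun K => ∃ k, p k = K ∧ S.2 k⟩ 1

/-- The differential applied to a single enhanced state: the signed sum, over all
edges `e` not in `S`, of the states obtained by adding `e`; the sign is `(-1)^{n(e)}`
where `n(e)` is the number of edges of `S` ordered before `e`. -/
noncomputable def dState (S : G.EState) : G.EState →₀ ℤ :=
  ∑ e : Fin G.n, ((-1 : ℤ) ^ (S.1.filter fun f => f < e).card) • G.addEdge S e

/-- The differential of the graph cohomology complex, as a linear endomorphism of
the free `ℤ`-module generated by all enhanced states. -/
noncomputable def diff : (G.EState →₀ ℤ) →ₗ[ℤ] (G.EState →₀ ℤ) :=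
  Finsupp.lsum ℤ fun S => LinearMap.toSpanSingleton ℤ _ (G.dState S)

/-- The chain group `C^{i,j}(G)`: the free `ℤ`-module spanned by the enhanced
states with `i` edges and `j` components colored `x`, as a submodule of the free
module on all enhanced states. -/
noncomputable def Cmod (i j : ℕ) : Submodule ℤ (G.EState →₀ ℤ) :=
  Finsupp.supported ℤ ℤ {S : G.EState | S.1.card = i ∧ G.jdeg S = j}

/-- The cocycles of bidegree `(i,j)`. -/
noncomputable def Zmod (i j : ℕ) : Submodule ℤ (G.EState →₀ ℤ) :=
  LinearMap.ker G.diff ⊓ G.Cmod i j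

/-- The coboundaries: `0` for `i = 0`, the image of `C^{i,j}` for `i + 1`. -/
noncomputable def Bmod : ℕ → ℕ → Submodule ℤ (G.EState →₀ ℤ)
  | 0, _ => ⊥
  | i + 1, j => Submodule.map G.diff (G.Cmod i j)

/-- The graph cohomology group `H^{i,j}(G)` (cocycles modulo coboundaries in
bidegree `(i,j)`). -/
noncomputable def Hmod (i j : ℕ) : Type :=
  (G.Zmod i j).toAddSubgroup ⧸
    (AddSubgroup.comap (G.Zmod i j).toAddSubgroup.subtype (G.Bmod i j).toAddSubgroup)

noncomputable instance (i j : ℕ) : AddCommGroup (G.Hmod i j) := by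
  delta Hmod; infer_instance

end OGraph

/-!
Root the tree and order its edges by the distance of their far ends from the root, ties being
broken arbitrarily. Call an edge inert in an enhanced state if it is absent and the component of
its far end is colored `x`. Adding or removing the last non-inert edge, with the cut-off part
uncolored, pairs up the enhanced states that have such an edge. Adding an earlier edge does not
change which edge this is, and adding a later one makes that later edge the last non-inert one.
Hence the block of the differential between the two halves of the pairing is triangular with
diagonal entries `±1`, and the cohomology is carried by the unpaired states: those without edges
in which every vertex other than the root is colored `x`. There are two of them, with `n` and
`n + 1` components colored `x`.
-/

theorem isUnit_matrix_of_rank_lt {ι R α : Type*} [Fintype ι] [DecidableEq ι] [CommRing R]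
    [LinearOrder α] {M : Matrix ι ι R} (rank : ι → α) (hdiag : ∀ a, IsUnit (M a a))
    (hoff : ∀ a b, a ≠ b → M a b ≠ 0 → rank a < rank b) : IsUnit M := by
  have htri : M.BlockTriangular rank := fun a b hba ↦ by
    by_contra hab
    exact (hoff a b (ne_of_apply_ne rank hba.ne') hab).not_gt hba
  have hblock (k : α) :
      M.toSquareBlock rank k = Matrix.diagonal fun a : {a // rank a = k} ↦ M a a := by
    refine Matrix.ext fun a b ↦ ?_
    rcases eq_or_ne a b with rfl | hab
    · simp [Matrix.toSquareBlock_def]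
    · rw [Matrix.diagonal_apply_ne _ hab]
      by_contra h
      exact (hoff a b (Subtype.coe_injective.ne hab) h).ne (a.2.trans b.2.symm)
  rw [Matrix.isUnit_iff_isUnit_det, htri.det, IsUnit.prod_iff]
  intro k _
  rw [hblock, Matrix.det_diagonal, IsUnit.prod_iff]
  exact fun a _ ↦ hdiag a

theorem existsUnique_mem_supported_of_triangular {X Y R α : Type*} [CommRing R] [LinearOrder α]
    (f : (X →₀ R) →ₗ[R] (Y →₀ R)) {D : Set X} [Finite D] (up : D → Y) (rank : D → α)
    (hdiag : ∀ a : D, IsUnit (f (Finsupp.single ↑a 1) (up a)))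
    (hoff : ∀ a b : D, a ≠ b → f (Finsupp.single ↑a 1) (up b) ≠ 0 → rank a < rank b)
    (w : D → R) : ∃! y, y ∈ Finsupp.supported R R D ∧ ∀ b, f y (up b) = w b := by
  classical
  have := Fintype.ofFinite D
  let M : Matrix D D R := Matrix.of fun a b ↦ f (Finsupp.single ↑a 1) (up b)
  have hM : IsUnit M := isUnit_matrix_of_rank_lt rank hdiag hoff
  let e : Finsupp.supported R R D ≃ₗ[R] (D → R) :=
    Finsupp.supportedEquivFinsupp D ≪≫ₗ Finsupp.linearEquivFunOnFinite R R D
  have hf (y : Finsupp.supported R R D) (b : D) : f y (up b) = (Matrix.vecMul (e y) M) b := by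
    have hlin : Finsupp.lapply (up b) ∘ₗ f ∘ₗ Submodule.subtype _ ∘ₗ e.symm.toLinearMap =
        LinearMap.proj b ∘ₗ M.vecMulLinear := by
      refine LinearMap.pi_ext' fun a ↦ LinearMap.ext_ring ?_
      simp [e, M]
    simpa using LinearMap.congr_fun hlin (e y)
  have hbij : Function.Bijective fun y ↦ Matrix.vecMul (e y) M :=
    Function.Bijective.comp ⟨Matrix.vecMul_injective_of_isUnit hM,
      Matrix.vecMul_surjective_iff_isUnit.2 hM⟩ e.bijective
  obtain ⟨y, hy, huniq⟩ := hbij.existsUnique w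
  refine ⟨y, ⟨y.2, fun b ↦ (hf y b).trans (congrFun hy b)⟩, fun z ⟨hzD, hz⟩ ↦ ?_⟩
  exact congrArg Subtype.val (huniq ⟨z, hzD⟩ (funext fun b ↦ (hf ⟨z, hzD⟩ b).symm.trans (hz b)))

namespace OGraph

section Components

variable {G : OGraph} {s t : Finset (Fin G.n)} {v w a b : G.V} {e f : Fin G.n}

/-- The connected component of the vertex `v` in the spanning subgraph `[G:s]`. -/
def component (s : Finset (Fin G.n)) (v : G.V) : G.Comp s := Quot.mk _ v

instance (s : Finset (Fin G.n)) : Finite (G.Comp s) := inferInstanceAs (Finite (Quot _))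

theorem component_surjective (s : Finset (Fin G.n)) :
    Function.Surjective (component s) := Quot.mk_surjective

theorem component_eq_of_ends_eq (he : e ∈ s) (h : G.ends e = s(v, w)) :
    component s v = component s w := Quot.sound ⟨e, he, h⟩

theorem component_eq_least {R : G.V → G.V → Prop} (hR : Equivalence R)
    (hs : ∀ u v, G.rel s u v → R u v) (h : component s v = component s w) : R v w :=
  hR.eqvGen_iff.1 (Relation.EqvGen.mono hs _ _ (Quot.eqvGen_exact h))

/-- The map on components induced by an inclusion of edge sets. -/
def compMap (hst : s ⊆ t) : G.Comp s → G.Comp t :=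
  qmap fun _ _ ⟨e, he, hends⟩ ↦ ⟨e, hst he, hends⟩

theorem component_eq_mono (hst : s ⊆ t) (h : component s v = component s w) :
    component t v = component t w :=
  congrArg (compMap hst) h

theorem component_empty_injective :
    Function.Injective (component (∅ : Finset (Fin G.n))) := fun _ _ h ↦
  component_eq_least eq_equivalence (fun _ _ ⟨_, he, _⟩ ↦ absurd he (Finset.notMem_empty _)) h

theorem component_insert_eq_iff (hf : G.ends f = s(a, b)) :
    component (insert f s) v = component (insert f s) w ↔
      component s v = component s w ∨
      (component s v = component s a ∧ component s w = component s b) ∨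
      (component s v = component s b ∧ component s w = component s a) := by
  constructor
  · refine component_eq_least (R := fun v w ↦ component s v = component s w ∨
      (component s v = component s a ∧ component s w = component s b) ∨
      (component s v = component s b ∧ component s w = component s a))
      ⟨fun _ ↦ .inl rfl, by grind, by grind⟩ ?_
    rintro u v ⟨e, he, hends⟩
    rcases Finset.mem_insert.1 he with rfl | he
    · rcases Sym2.eq_iff.1 (hf.symm.trans hends) with ⟨rfl, rfl⟩ | ⟨rfl, rfl⟩ <;> simp
    · exact .inl (component_eq_of_ends_eq he hends)
  · have hab : component (insert f s) a = component (insert f s) b :=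
      component_eq_of_ends_eq (Finset.mem_insert_self f s) hf
    have hmono {v w : G.V} := component_eq_mono (v := v) (w := w) (Finset.subset_insert f s)
    rintro (h | ⟨hv, hw⟩ | ⟨hv, hw⟩)
    · exact hmono h
    · exact (hmono hv).trans (hab.trans (hmono hw).symm)
    · exact (hmono hv).trans (hab.symm.trans (hmono hw).symm)

end Components

section States

variable {G : OGraph} {S S' : G.EState} {t t' : Finset (Fin G.n)} {v w : G.V}
  {f : Fin G.n} {i j : ℕ}

/-- The vertex `v` lies in a component of `S` colored `x`. -/
def Colored (S : G.EState) (v : G.V) : Prop := S.2 (component S.1 v)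

theorem colored_congr (h : component S.1 v = component S.1 w) : Colored S v ↔ Colored S w := by
  rw [Colored, Colored, h]

theorem eState_ext (hedges : S.1 = S'.1) (hcolored : ∀ v, Colored S v ↔ Colored S' v) :
    S = S' := by
  obtain ⟨s, c⟩ := S
  obtain ⟨s', c'⟩ := S'
  obtain rfl : s = s' := hedges
  exact congrArg _ (funext ((component_surjective s).forall.2 fun v ↦ propext (hcolored v)))

/-- The enhanced state with edge set `s` whose components colored `x` are those that contain a
vertex satisfying `P`. -/
def spread (s : Finset (Fin G.n)) (P : G.V → Prop) : G.EState :=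
  ⟨s, fun K ↦ ∃ v, component s v = K ∧ P v⟩

/-- The enhanced state obtained from `S` by enlarging its edge set to `t` and multiplying the
colors of the components that get merged, under the proviso (`Separated`) that no product
`x∗x` occurs. -/
def extend (S : G.EState) (t : Finset (Fin G.n)) : G.EState := spread t (Colored S)

theorem extend_extend (htt' : t ⊆ t') : extend (extend S t) t' = extend S t' :=
  eState_ext rfl fun _ ↦
    ⟨fun ⟨_, hw, u, hu, hcol⟩ ↦ ⟨u, (component_eq_mono htt' hu).trans hw, hcol⟩,
      fun ⟨w, hw, hcol⟩ ↦ ⟨w, hw, w, rfl, hcol⟩⟩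

/-- Distinct components of `S` colored `x` stay distinct in `[G:t]`. -/
def Separated (S : G.EState) (t : Finset (Fin G.n)) : Prop :=
  ∀ v w, Colored S v → Colored S w → component t v = component t w →
    component S.1 v = component S.1 w

theorem exists_compMap_eq_iff (hSt : S.1 ⊆ t) :
    (∃ k₁ k₂, k₁ ≠ k₂ ∧ compMap hSt k₁ = compMap hSt k₂ ∧ S.2 k₁ ∧ S.2 k₂) ↔
      ¬ Separated S t := by
  simp only [(component_surjective S.1).exists, Separated, not_forall]
  exact ⟨fun ⟨v, w, hne, h, hv, hw⟩ ↦ ⟨v, w, hv, hw, h, hne⟩,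
    fun ⟨v, w, hv, hw, h, hne⟩ ↦ ⟨v, w, hne, h, hv, hw⟩⟩

theorem separated_iff (hSt : S.1 ⊆ t) (htt' : t ⊆ t') :
    Separated S t' ↔ Separated S t ∧ Separated (extend S t) t' := by
  constructor
  · refine fun h ↦ ⟨fun v w hv hw hvw ↦ h v w hv hw (component_eq_mono htt' hvw), ?_⟩
    rintro v w ⟨v', hv', hcv⟩ ⟨w', hw', hcw⟩ hvw
    have hvw' : component S.1 v' = component S.1 w' := h v' w' hcv hcw
      ((component_eq_mono htt' hv').trans (hvw.trans (component_eq_mono htt' hw').symm))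
    exact hv'.symm.trans ((component_eq_mono hSt hvw').trans hw')
  · rintro ⟨h, h'⟩ v w hv hw hvw
    exact h v w hv hw (h' v w ⟨v, rfl, hv⟩ ⟨w, rfl, hw⟩ hvw)

theorem jdeg_extend (hSt : S.1 ⊆ t) (hsep : Separated S t) :
    G.jdeg (extend S t) = G.jdeg S := by
  refine (Nat.card_eq_of_bijective (fun k : {k // S.2 k} ↦
    (⟨compMap hSt k.1, ?_⟩ : {k // (extend S t).2 k})) ⟨?_, ?_⟩).symm
  · obtain ⟨k, hk⟩ := k
    obtain ⟨v, rfl⟩ := component_surjective _ k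
    exact ⟨v, rfl, hk⟩
  · rintro ⟨k, hk⟩ ⟨k', hk'⟩ h
    obtain ⟨v, rfl⟩ := component_surjective _ k
    obtain ⟨v', rfl⟩ := component_surjective _ k'
    exact Subtype.ext (hsep v v' hk hk' (congrArg Subtype.val h))
  · rintro ⟨_, v, rfl, hv⟩
    exact ⟨⟨component S.1 v, hv⟩, rfl⟩

theorem jdeg_eq_card_colored (hS : S.1 = ∅) : G.jdeg S = Nat.card {v // Colored S v} := by
  have hinj : Function.Injective (component S.1) := hS ▸ component_empty_injective
  exact (Nat.card_congr ((Equiv.ofBijective _ ⟨hinj, component_surjective S.1⟩).subtypeEquiv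
    fun _ ↦ Iff.rfl)).symm

/-- The enhanced states of bidegree `(i, j)`, which form the basis of `G.Cmod i j`. -/
def bidegree (G : OGraph) (i j : ℕ) : Set G.EState := {S | S.1.card = i ∧ G.jdeg S = j}

theorem mem_bidegree_extend_insert_iff (hf : f ∉ S.1) (hsep : Separated S (insert f S.1)) :
    extend S (insert f S.1) ∈ G.bidegree (i + 1) j ↔ S ∈ G.bidegree i j := by
  have hcard : (extend S (insert f S.1)).1.card = S.1.card + 1 :=
    Finset.card_insert_of_notMem hf
  simp only [bidegree, Set.mem_ofPred_eq, hcard, jdeg_extend (Finset.subset_insert f S.1) hsep,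
    Nat.add_right_cancel_iff]

end States

section Differential

variable {G : OGraph} {S u : G.EState} {s t : Finset (Fin G.n)} {e f : Fin G.n} {i j : ℕ}
  {z : G.EState →₀ ℤ}

open Classical in
/-- The chain obtained from `S` by adding the edges of `t`: the state `extend S t`, or `0` if a
product `x∗x = 0` occurs on the way. -/
noncomputable def extendChain (S : G.EState) (t : Finset (Fin G.n)) : G.EState →₀ ℤ :=
  if Separated S t then Finsupp.single (extend S t) 1 else 0

theorem extendChain_of_separated (h : Separated S t) :
    extendChain S t = Finsupp.single (extend S t) 1 := if_pos h

theorem extendChain_of_not_separated (h : ¬ Separated S t) : extendChain S t = 0 := if_neg h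

theorem extendChain_apply_ne_zero_iff :
    extendChain S t u ≠ 0 ↔ Separated S t ∧ u = extend S t := by
  by_cases h : Separated S t
  · simp [extendChain_of_separated, h, Finsupp.single_apply_ne_zero]
  · simp [extendChain_of_not_separated, h]

theorem addEdge_of_notMem (he : e ∉ S.1) : G.addEdge S e = extendChain S (insert e S.1) := by
  have hsub : S.1 ⊆ insert e S.1 := Finset.subset_insert e S.1
  have hextend : (⟨insert e S.1, fun K ↦ ∃ k, compMap hsub k = K ∧ S.2 k⟩ : G.EState) =
      extend S (insert e S.1) :=
    congrArg _ (funext fun _ ↦ propext (component_surjective S.1).exists)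
  rw [addEdge, if_neg he]
  by_cases hsep : Separated S (insert e S.1)
  · rw [extendChain_of_separated hsep, ← hextend]
    exact if_neg fun h ↦ (exists_compMap_eq_iff hsub).1 h hsep
  · rw [extendChain_of_not_separated hsep]
    exact if_pos ((exists_compMap_eq_iff hsub).2 hsep)

/-- The sign `(-1)^{n(e)}` with which the differential adds the edge `e` to a state with edge
set `s`. -/
def edgeSign (s : Finset (Fin G.n)) (e : Fin G.n) : ℤ := (-1) ^ (s.filter (· < e)).card

theorem isUnit_edgeSign (s : Finset (Fin G.n)) (e : Fin G.n) : IsUnit (edgeSign s e) :=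
  isUnit_neg_one.pow _

theorem edgeSign_insert_of_lt (he : e ∉ s) (hef : e < f) :
    edgeSign (insert e s) f = -edgeSign s f := by
  rw [edgeSign, Finset.filter_insert, if_pos hef, Finset.card_insert_of_notMem (by simp [he]),
    pow_succ, mul_neg_one, edgeSign]

theorem edgeSign_insert_of_gt (hfe : f < e) : edgeSign (insert e s) f = edgeSign s f := by
  rw [edgeSign, Finset.filter_insert, if_neg hfe.not_gt, edgeSign]

theorem edgeSign_mul_edgeSign_insert (he : e ∉ s) (hf : f ∉ s) (hne : e ≠ f) :
    edgeSign s e * edgeSign (insert e s) f = -(edgeSign s f * edgeSign (insert f s) e) := by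
  rcases hne.lt_or_gt with h | h
  · rw [edgeSign_insert_of_lt he h, edgeSign_insert_of_gt h]
    ring
  · rw [edgeSign_insert_of_gt h, edgeSign_insert_of_lt hf h]
    ring

theorem diff_single (S : G.EState) :
    G.diff (Finsupp.single S 1) =
      ∑ e ∈ S.1ᶜ, edgeSign S.1 e • extendChain S (insert e S.1) := by
  have hdState : G.diff (Finsupp.single S 1) = ∑ e, edgeSign S.1 e • G.addEdge S e := by
    simp [diff, dState, edgeSign]
  rw [hdState, ← Finset.sum_compl_add_sum S.1, Finset.sum_eq_zero (s := S.1), add_zero]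
  · exact Finset.sum_congr rfl fun e he ↦ by rw [addEdge_of_notMem (Finset.mem_compl.1 he)]
  · intro e he
    rw [addEdge, if_pos he, smul_zero]

theorem diff_extendChain (hSt : S.1 ⊆ t) :
    G.diff (extendChain S t) = ∑ f ∈ tᶜ, edgeSign t f • extendChain S (insert f t) := by
  classical
  have hsub (f : Fin G.n) : t ⊆ insert f t := Finset.subset_insert f t
  by_cases hsep : Separated S t
  · have hstep (f : Fin G.n) : extendChain (extend S t) (insert f t) =
        extendChain S (insert f t) := by
      have hiff : Separated S (insert f t) ↔ Separated (extend S t) (insert f t) :=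
        (separated_iff hSt (hsub f)).trans (and_iff_right hsep)
      rw [extendChain, extendChain, extend_extend (hsub f)]
      exact if_congr hiff.symm rfl rfl
    rw [extendChain_of_separated hsep, diff_single]
    exact Finset.sum_congr rfl fun f _ ↦ by rw [← hstep]; rfl
  · have hzero (f : Fin G.n) : extendChain S (insert f t) = 0 :=
      extendChain_of_not_separated fun h ↦ hsep ((separated_iff hSt (hsub f)).1 h).1
    simp [extendChain_of_not_separated hsep, hzero]

theorem diff_diff (z : G.EState →₀ ℤ) : G.diff (G.diff z) = 0 := by
  suffices h : G.diff ∘ₗ G.diff = 0 from LinearMap.congr_fun h z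
  refine Finsupp.lhom_ext' fun S ↦ LinearMap.ext_ring ?_
  have hexpand : G.diff (G.diff (Finsupp.single S 1)) =
      ∑ p ∈ S.1ᶜ.sigma fun e ↦ (insert e S.1)ᶜ,
        (edgeSign S.1 p.1 * edgeSign (insert p.1 S.1) p.2) •
          extendChain S (insert p.2 (insert p.1 S.1)) := by
    simp only [diff_single, map_sum, map_smul, Finset.sum_sigma,
      diff_extendChain (Finset.subset_insert _ _), Finset.smul_sum, smul_smul]
  refine hexpand.trans (Finset.sum_involution (fun p _ ↦ ⟨p.2, p.1⟩) ?_ ?_ ?_ fun _ _ ↦ rfl)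
  · rintro ⟨e, f⟩ hef
    obtain ⟨he, hfe, hf⟩ : e ∉ S.1 ∧ f ≠ e ∧ f ∉ S.1 := by simpa using hef
    dsimp only
    rw [edgeSign_mul_edgeSign_insert he hf hfe.symm, Finset.insert_comm e f, neg_smul,
      neg_add_cancel]
  · rintro ⟨e, f⟩ hef - heq
    obtain ⟨-, hfe, -⟩ : e ∉ S.1 ∧ f ≠ e ∧ f ∉ S.1 := by simpa using hef
    exact hfe (congrArg Sigma.fst heq)
  · rintro ⟨e, f⟩ hef
    obtain ⟨he, hfe, hf⟩ : e ∉ S.1 ∧ f ≠ e ∧ f ∉ S.1 := by simpa using hef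
    simp [he, hf, hfe.symm]

theorem diff_single_apply_extend (hf : f ∉ S.1) (hsep : Separated S (insert f S.1)) :
    G.diff (Finsupp.single S 1) (extend S (insert f S.1)) = edgeSign S.1 f := by
  rw [diff_single, Finsupp.finsetSum_apply,
    Finset.sum_eq_single_of_mem f (Finset.mem_compl.2 hf)]
  · simp [extendChain_of_separated hsep]
  · intro e _ hef
    rw [Finsupp.smul_apply, smul_eq_zero_iff_right (isUnit_edgeSign _ _).ne_zero]
    by_contra hne
    have hinsert : insert f S.1 = insert e S.1 :=
      congrArg Sigma.fst (extendChain_apply_ne_zero_iff.1 hne).2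
    exact hef ((Finset.insert_inj hf).1 hinsert).symm

theorem exists_of_diff_single_apply_ne_zero (h : G.diff (Finsupp.single S 1) u ≠ 0) :
    ∃ f ∉ S.1, Separated S (insert f S.1) ∧ u = extend S (insert f S.1) := by
  rw [diff_single, Finsupp.finsetSum_apply] at h
  obtain ⟨f, hf, hne⟩ := Finset.exists_ne_zero_of_sum_ne_zero h
  exact ⟨f, Finset.mem_compl.1 hf, extendChain_apply_ne_zero_iff.1 (right_ne_zero_of_mul hne)⟩

theorem diff_mem_Cmod (hz : z ∈ G.Cmod i j) : G.diff z ∈ G.Cmod (i + 1) j := by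
  suffices h : G.Cmod i j ≤ (G.Cmod (i + 1) j).comap G.diff from h hz
  rw [Cmod, Finsupp.supported_eq_span_single, Submodule.span_le]
  rintro _ ⟨S, hS, rfl⟩
  refine (Finsupp.mem_supported ℤ _).2 fun u hu ↦ ?_
  obtain ⟨f, hf, hsep, rfl⟩ := exists_of_diff_single_apply_ne_zero (Finsupp.mem_support_iff.1 hu)
  exact (mem_bidegree_extend_insert_iff hf hsep).2 hS

end Differential

section RootedTree

variable {G : OGraph}

/-- A presentation of `G` as a tree with a distinguished root: each edge joins a vertex other than
the root, its child end, to a parent of smaller rank, and every such vertex is the child end of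
exactly one edge. The injective `rank` fixes a total order on the vertices. -/
structure RootedTree (G : OGraph) (α : Type*) [LinearOrder α] where
  root : G.V
  rank : G.V → α
  rank_injective : Function.Injective rank
  parent : Fin G.n → G.V
  childEquiv : Fin G.n ≃ {v : G.V // v ≠ root}
  ends_eq (e : Fin G.n) : G.ends e = s(parent e, childEquiv e)
  rank_parent_lt (e : Fin G.n) : rank (parent e) < rank (childEquiv e)

theorem exists_dist_lt_of_ne_root (hconn : Subsingleton (G.Comp Finset.univ)) (root : G.V) :
    ∃ d : G.V → ℕ, ∀ v : {v // v ≠ root}, ∃ e u, G.ends e = s(u, ↑v) ∧ d u < d v := by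
  let H : SimpleGraph G.V := SimpleGraph.fromRel (G.rel Finset.univ)
  have hreach (v : G.V) : H.Reachable v root := by
    refine component_eq_least H.reachable_is_equivalence (fun u v huv ↦ ?_)
      (Subsingleton.elim (component Finset.univ v) (component Finset.univ root))
    rcases eq_or_ne u v with rfl | hne
    · rfl
    · exact SimpleGraph.Adj.reachable ((SimpleGraph.fromRel_adj _ _ _).2 ⟨hne, .inl huv⟩)
  refine ⟨fun v ↦ H.dist v root, fun ⟨v, hv⟩ ↦ ?_⟩
  obtain ⟨p, hp⟩ := (hreach v).exists_walk_length_eq_dist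
  cases p with
  | nil => exact absurd rfl hv
  | @cons _ u _ hvu q =>
    have hdist : H.dist u root < H.dist v root :=
      hp ▸ Nat.lt_succ_of_le (SimpleGraph.dist_le q)
    rcases ((SimpleGraph.fromRel_adj _ _ _).1 hvu).2 with ⟨e, -, he⟩ | ⟨e, -, he⟩
    · exact ⟨e, u, he.trans Sym2.eq_swap, hdist⟩
    · exact ⟨e, u, he, hdist⟩

theorem nonempty_rootedTree (hcard : Fintype.card G.V = G.n + 1)
    (hconn : Subsingleton (G.Comp Finset.univ)) : Nonempty (RootedTree G (ℕ ×ₗ ℕ)) := by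
  classical
  obtain ⟨root⟩ : Nonempty G.V := Fintype.card_pos_iff.1 (hcard ▸ G.n.succ_pos)
  obtain ⟨d, hd⟩ := exists_dist_lt_of_ne_root hconn root
  choose parentEdge parent hends hlt using hd
  have hinj : Function.Injective parentEdge := by
    intro v w hvw
    have hsym : s(parent v, ↑v) = s(parent w, (w : G.V)) := by rw [← hends, ← hends, hvw]
    rcases Sym2.eq_iff.1 hsym with ⟨-, h⟩ | ⟨hv, hw⟩
    · exact Subtype.ext h
    · have hlt_v := hlt v
      have hlt_w := hlt w
      rw [hv] at hlt_v
      rw [← hw] at hlt_w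
      exact absurd hlt_w hlt_v.not_gt
  have hcard' : Fintype.card {v // v ≠ root} = Fintype.card (Fin G.n) := by simp [hcard]
  let edgeEquiv : {v // v ≠ root} ≃ Fin G.n :=
    .ofBijective parentEdge ((Fintype.bijective_iff_injective_and_card _).2 ⟨hinj, hcard'⟩)
  refine ⟨{
    root
    rank v := toLex (d v, (Fintype.equivFin G.V v : ℕ))
    rank_injective v w hvw :=
      (Fintype.equivFin G.V).injective (Fin.ext (congrArg (fun p ↦ (ofLex p).2) hvw))
    parent e := parent (edgeEquiv.symm e)
    childEquiv := edgeEquiv.symm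
    ends_eq e := (congrArg G.ends (edgeEquiv.apply_symm_apply e)).symm.trans (hends _)
    rank_parent_lt e := Prod.Lex.toLex_lt_toLex.2 (.inl (hlt _)) }⟩

end RootedTree

namespace RootedTree

section Pivots

variable {G : OGraph} {α : Type*} [LinearOrder α] (T : RootedTree G α)
  {S u : G.EState} {s : Finset (Fin G.n)} {e f g : Fin G.n} {v : G.V}

/-- The end of the edge `e` that is farther from the root. -/
def child (e : Fin G.n) : G.V := T.childEquiv e

/-- The total order on the edges in which pivots are chosen. -/
def edgeRank (e : Fin G.n) : α := T.rank (T.child e)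

theorem child_injective : Function.Injective T.child :=
  Subtype.val_injective.comp T.childEquiv.injective

theorem edgeRank_injective : Function.Injective T.edgeRank :=
  T.rank_injective.comp T.child_injective

theorem rank_child_le_of_component_eq (hf : f ∉ s)
    (h : component s (T.child f) = component s v) : T.rank (T.child f) ≤ T.rank v := by
  let Desc := Relation.ReflTransGen fun u w ↦ ∃ e, T.parent e = u ∧ T.child e = w
  have hrank {w : G.V} (hw : Desc (T.child f) w) : T.rank (T.child f) ≤ T.rank w := by
    induction hw with
    | refl => rfl
    | tail _ hstep ih =>
      obtain ⟨e, rfl, rfl⟩ := hstep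
      exact ih.trans (T.rank_parent_lt e).le
  have hiff (e : Fin G.n) (he : e ∈ s) :
      Desc (T.child f) (T.parent e) ↔ Desc (T.child f) (T.child e) := by
    refine ⟨fun h ↦ h.tail ⟨e, rfl, rfl⟩, fun h ↦ ?_⟩
    rcases h.cases_tail with heq | ⟨_, hdesc, e', rfl, heq⟩
    · exact absurd (T.child_injective heq ▸ he) hf
    · rwa [← T.child_injective heq]
  refine hrank ((component_eq_least (R := fun u w ↦ Desc (T.child f) u ↔ Desc (T.child f) w)
    ⟨fun _ ↦ Iff.rfl, Iff.symm, Iff.trans⟩ ?_ h).1 .refl)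
  rintro u w ⟨e, he, hends⟩
  rcases Sym2.eq_iff.1 ((T.ends_eq e).symm.trans hends) with ⟨rfl, rfl⟩ | ⟨rfl, rfl⟩
  · exact hiff e he
  · exact (hiff e he).symm

theorem component_child_ne_component_parent (hg : g ∉ s) (hfg : T.edgeRank f ≤ T.edgeRank g) :
    component s (T.child g) ≠ component s (T.parent f) := fun h ↦
  (T.rank_child_le_of_component_eq hg h).not_gt ((T.rank_parent_lt f).trans_le hfg)

theorem component_child_ne_component_child (hf : f ∉ s) (hg : g ∉ s) (hfg : f ≠ g) :
    component s (T.child f) ≠ component s (T.child g) := fun h ↦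
  hfg (T.edgeRank_injective (le_antisymm (T.rank_child_le_of_component_eq hf h)
    (T.rank_child_le_of_component_eq hg h.symm)))

theorem component_insert_child_eq_iff (hf : f ∉ s) (hg : g ∉ s)
    (hfg : T.edgeRank f < T.edgeRank g) :
    component (insert f s) v = component (insert f s) (T.child g) ↔
      component s v = component s (T.child g) := by
  have hparent := T.component_child_ne_component_parent hg hfg.le
  have hchild := T.component_child_ne_component_child hg hf (ne_of_apply_ne T.edgeRank hfg.ne')
  rw [component_insert_eq_iff (T.ends_eq f)]
  exact or_iff_left (not_or_intro (fun h ↦ hchild h.2) fun h ↦ hparent h.2)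

theorem separated_insert_of_not_colored_child (hf : ¬ Colored S (T.child f)) :
    Separated S (insert f S.1) := by
  intro v w hv hw h
  rcases (component_insert_eq_iff (T.ends_eq f)).1 h with h | ⟨-, h⟩ | ⟨h, -⟩
  · exact h
  · exact absurd ((colored_congr h).1 hw) hf
  · exact absurd ((colored_congr h).1 hv) hf

/-- The edge `e` is absent from `S`, and the component of its child end is colored `x`. Edges of
this kind are left alone by the matching. -/
def Inert (S : G.EState) (e : Fin G.n) : Prop := e ∉ S.1 ∧ Colored S (T.child e)

/-- The edge `e` is the last non-inert edge of `S`: the one which the matching toggles. -/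
def IsPivot (S : G.EState) (e : Fin G.n) : Prop :=
  ¬ T.Inert S e ∧ ∀ g, T.edgeRank e < T.edgeRank g → T.Inert S g

/-- The states without a pivot, which the matching leaves unmatched. -/
def IsCritical (S : G.EState) : Prop := ∀ e, T.Inert S e

variable {T}

theorem exists_isPivot (hS : ¬ T.IsCritical S) : ∃ e, T.IsPivot S e := by
  obtain ⟨e, he, hmax⟩ := {e | ¬ T.Inert S e}.toFinite.exists_maximalFor T.edgeRank _
    (not_forall.1 hS)
  refine ⟨e, he, fun g hg ↦ ?_⟩
  by_contra hinert
  exact (hmax hinert hg.le).not_gt hg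

theorem IsPivot.unique (he : T.IsPivot S e) (hf : T.IsPivot S f) : e = f :=
  T.edgeRank_injective (le_antisymm (not_lt.1 fun h ↦ he.1 (hf.2 e h))
    (not_lt.1 fun h ↦ hf.1 (he.2 f h)))

theorem IsPivot.not_isCritical (he : T.IsPivot S e) : ¬ T.IsCritical S := fun h ↦ he.1 (h e)

theorem IsPivot.not_colored_child (he : T.IsPivot S e) (heS : e ∉ S.1) :
    ¬ Colored S (T.child e) := fun h ↦ he.1 ⟨heS, h⟩

theorem inert_extend_insert_iff (hf : f ∉ S.1) (hfg : T.edgeRank f < T.edgeRank g) :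
    T.Inert (extend S (insert f S.1)) g ↔ T.Inert S g := by
  have hne : g ≠ f := ne_of_apply_ne T.edgeRank hfg.ne'
  have hmem : g ∈ (extend S (insert f S.1)).1 ↔ g ∈ S.1 :=
    Finset.mem_insert.trans (or_iff_right hne)
  rw [Inert, Inert, hmem]
  refine and_congr_right fun hg ↦ ⟨fun ⟨v, hv, hcol⟩ ↦ ?_, fun hcol ↦ ⟨_, rfl, hcol⟩⟩
  exact (colored_congr ((T.component_insert_child_eq_iff hf hg hfg).1 hv)).1 hcol

theorem IsPivot.extend_insert_of_le (he : T.IsPivot S e) (hf : f ∉ S.1)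
    (hef : T.edgeRank e ≤ T.edgeRank f) : T.IsPivot (extend S (insert f S.1)) f :=
  ⟨fun h ↦ h.1 (Finset.mem_insert_self f S.1),
    fun g hg ↦ (inert_extend_insert_iff hf hg).2 (he.2 g (hef.trans_lt hg))⟩

theorem IsPivot.extend_insert_of_lt (he : T.IsPivot S e) (hf : f ∉ S.1)
    (hfe : T.edgeRank f < T.edgeRank e) : T.IsPivot (extend S (insert f S.1)) e :=
  ⟨(inert_extend_insert_iff hf hfe).not.2 he.1,
    fun g hg ↦ (inert_extend_insert_iff hf (hfe.trans hg)).2 (he.2 g hg)⟩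

variable (T) in
/-- The enhanced state obtained from `u` by deleting the edge `f`, where the part cut off on the
child side of `f` becomes uncolored. -/
def detach (u : G.EState) (f : Fin G.n) : G.EState :=
  spread (u.1.erase f) fun v ↦
    Colored u v ∧ component (u.1.erase f) v ≠ component (u.1.erase f) (T.child f)

theorem colored_detach : Colored (T.detach u f) v ↔
    Colored u v ∧ component (u.1.erase f) v ≠ component (u.1.erase f) (T.child f) := by
  refine ⟨fun ⟨w, hwv, hw, hne⟩ ↦ ⟨?_, hwv ▸ hne⟩, fun h ↦ ⟨v, rfl, h⟩⟩
  exact (colored_congr (component_eq_mono (Finset.erase_subset f u.1) hwv)).1 hw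

theorem detach_extend_insert (hf : f ∉ S.1) (hcol : ¬ Colored S (T.child f)) :
    T.detach (extend S (insert f S.1)) f = S := by
  have hedges : (extend S (insert f S.1)).1.erase f = S.1 := Finset.erase_insert hf
  refine eState_ext hedges fun v ↦ ?_
  rw [colored_detach, hedges]
  refine ⟨fun ⟨⟨w, hwv, hw⟩, hne⟩ ↦ ?_,
    fun hv ↦ ⟨⟨v, rfl, hv⟩, fun h ↦ hcol ((colored_congr h).1 hv)⟩⟩
  rcases (component_insert_eq_iff (T.ends_eq f)).1 hwv with h | ⟨-, h⟩ | ⟨h, -⟩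
  · exact (colored_congr h).1 hw
  · exact absurd h hne
  · exact absurd ((colored_congr h).1 hw) hcol

theorem extend_insert_detach (hf : f ∈ u.1) :
    extend (T.detach u f) (insert f (T.detach u f).1) = u := by
  have hinsert : insert f (u.1.erase f) = u.1 := Finset.insert_erase hf
  have hnotMem : f ∉ u.1.erase f := Finset.notMem_erase f u.1
  have hends : component u.1 (T.parent f) = component u.1 (T.child f) :=
    component_eq_of_ends_eq hf (T.ends_eq f)
  refine eState_ext hinsert fun v ↦ ?_
  change (∃ w, component (insert f (u.1.erase f)) w = component (insert f (u.1.erase f)) v ∧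
    Colored (T.detach u f) w) ↔ _
  rw [hinsert]
  simp only [colored_detach]
  refine ⟨fun ⟨w, hwv, hw, _⟩ ↦ (colored_congr hwv).1 hw, fun hv ↦ ?_⟩
  by_cases hchild : component (u.1.erase f) v = component (u.1.erase f) (T.child f)
  · have hparent : component u.1 (T.parent f) = component u.1 v :=
      hends.trans (component_eq_mono (Finset.erase_subset f u.1) hchild).symm
    exact ⟨T.parent f, hparent, (colored_congr hparent).2 hv,
      (T.component_child_ne_component_parent hnotMem le_rfl).symm⟩
  · exact ⟨v, rfl, hv, hchild⟩

theorem IsPivot.detach (hu : T.IsPivot u f) : T.IsPivot (T.detach u f) f := by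
  have hnotMem : f ∉ u.1.erase f := Finset.notMem_erase f u.1
  refine ⟨fun h ↦ (colored_detach.1 h.2).2 rfl, fun g hg ↦ ?_⟩
  obtain ⟨hgu, hcol⟩ := hu.2 g hg
  have hg' : g ∉ u.1.erase f := fun h ↦ hgu (Finset.mem_of_mem_erase h)
  exact ⟨hg', colored_detach.2 ⟨hcol,
    T.component_child_ne_component_child hg' hnotMem (ne_of_apply_ne T.edgeRank hg.ne')⟩⟩

end Pivots

section Matching

variable {G : OGraph} {α : Type*} [LinearOrder α] (T : RootedTree G α)
  {S S' u : G.EState} {e e' : Fin G.n} {i j : ℕ} {z : G.EState →₀ ℤ}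

/-- The states of bidegree `(i, j)` that are matched with a state having one more edge. -/
def lower (i j : ℕ) : Set G.EState := {S ∈ G.bidegree i j | ∃ e ∉ S.1, T.IsPivot S e}

/-- The states of bidegree `(i, j)` that are matched with a state having one edge less. -/
def upper (i j : ℕ) : Set G.EState := {S ∈ G.bidegree i j | ∃ e ∈ S.1, T.IsPivot S e}

variable {T}

theorem lower_subset_bidegree : T.lower i j ⊆ G.bidegree i j := fun _ hS ↦ hS.1

theorem extend_insert_mem_upper (hS : S ∈ G.bidegree i j) (he : e ∉ S.1) (hpivot : T.IsPivot S e) :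
    extend S (insert e S.1) ∈ T.upper (i + 1) j :=
  have hsep := T.separated_insert_of_not_colored_child (hpivot.not_colored_child he)
  ⟨(mem_bidegree_extend_insert_iff he hsep).2 hS, e, Finset.mem_insert_self e S.1,
    hpivot.extend_insert_of_le he le_rfl⟩

theorem exists_mem_lower_of_mem_upper (hu : u ∈ T.upper (i + 1) j) :
    ∃ S ∈ T.lower i j, ∃ e ∉ S.1, T.IsPivot S e ∧ extend S (insert e S.1) = u := by
  obtain ⟨hdeg, e, heu, hpivot⟩ := hu
  have he : e ∉ (T.detach u e).1 := Finset.notMem_erase e u.1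
  have hextend := extend_insert_detach (T := T) heu
  have hsep := T.separated_insert_of_not_colored_child (hpivot.detach.not_colored_child he)
  refine ⟨T.detach u e, ⟨?_, e, he, hpivot.detach⟩, e, he, hpivot.detach, hextend⟩
  rwa [← mem_bidegree_extend_insert_iff he hsep, hextend]

theorem edgeRank_lt_of_diff_single_apply_ne_zero (he : e ∉ S.1) (hS : T.IsPivot S e)
    (he' : e' ∉ S'.1) (hS' : T.IsPivot S' e') (hne : S ≠ S')
    (h : G.diff (Finsupp.single S 1) (extend S' (insert e' S'.1)) ≠ 0) :
    T.edgeRank e < T.edgeRank e' := by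
  obtain ⟨f, hf, -, heq⟩ := exists_of_diff_single_apply_ne_zero h
  have hpivot' : T.IsPivot (extend S (insert f S.1)) e' :=
    heq ▸ hS'.extend_insert_of_le he' le_rfl
  rcases lt_or_ge (T.edgeRank f) (T.edgeRank e) with hfe | hef
  · obtain rfl : e' = e := hpivot'.unique (hS.extend_insert_of_lt hf hfe)
    have hedges : insert e' S'.1 = insert f S.1 := congrArg Sigma.fst heq
    have hmem : e' ∈ insert f S.1 := hedges ▸ Finset.mem_insert_self e' S'.1
    exact absurd hmem (by simp [he, ne_of_apply_ne T.edgeRank hfe.ne'])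
  · obtain rfl : e' = f := hpivot'.unique (hS.extend_insert_of_le hf hef)
    refine hef.lt_of_ne fun hrank ↦ hne ?_
    obtain rfl : e = e' := T.edgeRank_injective hrank
    rw [← detach_extend_insert he (hS.not_colored_child he), ← heq,
      detach_extend_insert he' (hS'.not_colored_child he')]

variable (T) in
theorem existsUnique_mem_supported_lower (i j : ℕ) (w : G.EState → ℤ) :
    ∃! y, y ∈ Finsupp.supported ℤ ℤ (T.lower i j) ∧
      ∀ u ∈ T.upper (i + 1) j, G.diff y u = w u := by
  choose pivot hnotMem hpivot using fun S : T.lower i j ↦ S.2.2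
  let up (S : T.lower i j) : G.EState := extend S (insert (pivot S) S.1.1)
  have hupper : T.upper (i + 1) j = Set.range up := by
    refine Set.Subset.antisymm (fun u hu ↦ ?_) ?_
    · obtain ⟨S, hS, e, -, he, rfl⟩ := exists_mem_lower_of_mem_upper hu
      exact ⟨⟨S, hS⟩, by rw [he.unique (hpivot ⟨S, hS⟩)]⟩
    · rintro _ ⟨S, rfl⟩
      exact extend_insert_mem_upper S.2.1 (hnotMem S) (hpivot S)
  have hdiag (S : T.lower i j) : IsUnit (G.diff (Finsupp.single ↑S 1) (up S)) := by
    rw [diff_single_apply_extend (hnotMem S) (T.separated_insert_of_not_colored_child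
      ((hpivot S).not_colored_child (hnotMem S)))]
    exact isUnit_edgeSign _ _
  simpa only [hupper, Set.forall_mem_range] using
    existsUnique_mem_supported_of_triangular G.diff up (fun S ↦ T.edgeRank (pivot S)) hdiag
      (fun S S' hne ↦ edgeRank_lt_of_diff_single_apply_ne_zero (hnotMem S) (hpivot S)
        (hnotMem S') (hpivot S') (Subtype.coe_injective.ne hne)) fun S ↦ w (up S)

theorem IsCritical.edges_eq_empty (hS : T.IsCritical S) : S.1 = ∅ :=
  Finset.eq_empty_of_forall_notMem fun e ↦ (hS e).1

theorem eq_zero_of_mem_Zmod (hz : z ∈ G.Zmod i j) (hcritical : ∀ S, T.IsCritical S → z S = 0)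
    (hupper : ∀ S ∈ T.upper i j, z S = 0) : z = 0 := by
  have hlower : z ∈ Finsupp.supported ℤ ℤ (T.lower i j) := fun S hS ↦ by
    have hzS : z S ≠ 0 := Finsupp.mem_support_iff.1 hS
    have hdeg : S ∈ G.bidegree i j := hz.2 hS
    obtain ⟨e, he⟩ := exists_isPivot fun h ↦ hzS (hcritical S h)
    exact ⟨hdeg, e, fun heS ↦ hzS (hupper S ⟨hdeg, e, heS, he⟩), he⟩
  have hdiff : G.diff z = 0 := hz.1
  exact (T.existsUnique_mem_supported_lower i j 0).unique ⟨hlower, by simp [hdiff]⟩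
    ⟨Submodule.zero_mem _, by simp⟩

variable (T) in
theorem exists_diff_eq_of_mem_Zmod (hz : z ∈ G.Zmod (i + 1) j) :
    ∃ y ∈ Finsupp.supported ℤ ℤ (T.lower i j), G.diff y = z := by
  obtain ⟨y, ⟨hy, hyz⟩, -⟩ := T.existsUnique_mem_supported_lower i j z
  have hdy : G.diff y ∈ G.Zmod (i + 1) j :=
    ⟨diff_diff y, diff_mem_Cmod (Finsupp.supported_mono lower_subset_bidegree hy)⟩
  have hsub : G.diff y - z ∈ G.Zmod (i + 1) j := Submodule.sub_mem _ hdy hz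
  refine ⟨y, hy, sub_eq_zero.1 (eq_zero_of_mem_Zmod (T := T) hsub (fun S hS ↦ ?_) fun u hu ↦ ?_)⟩
  · by_contra hne
    have hcard : S.1.card = i + 1 := (hsub.2 (Finsupp.mem_support_iff.2 hne)).1
    simp [hS.edges_eq_empty] at hcard
  · rw [Finsupp.sub_apply, hyz u hu, sub_self]

end Matching

section CriticalStates

variable {G : OGraph} {α : Type*} [LinearOrder α] (T : RootedTree G α)
  {S S' : G.EState} {j : ℕ}

/-- The critical states with `j` components colored `x`. -/
def critical (j : ℕ) : Set G.EState := {S | T.IsCritical S ∧ G.jdeg S = j}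

variable {T} in
theorem critical_subset_bidegree : T.critical j ⊆ G.bidegree 0 j := fun _ hS ↦
  ⟨Finset.card_eq_zero.2 hS.1.edges_eq_empty, hS.2⟩

theorem exists_mem_Zmod_zero (w : T.critical j → ℤ) :
    ∃ z ∈ G.Zmod 0 j, ∀ S : T.critical j, z S = w S := by
  obtain ⟨⟨z, hzcrit⟩, hzw⟩ :=
    (Finsupp.supportedEquivFinsupp (R := ℤ) (T.critical j)).surjective
      (Finsupp.equivFunOnFinite.symm w)
  have hz : z ∈ G.Cmod 0 j := Finsupp.supported_mono critical_subset_bidegree hzcrit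
  obtain ⟨y, hy, hyz⟩ := T.exists_diff_eq_of_mem_Zmod ⟨diff_diff z, diff_mem_Cmod hz⟩
  have hyC : y ∈ G.Cmod 0 j := Finsupp.supported_mono lower_subset_bidegree hy
  refine ⟨z - y, ⟨?_, Submodule.sub_mem _ hz hyC⟩, fun S ↦ ?_⟩
  · rw [SetLike.mem_coe, LinearMap.mem_ker, map_sub, hyz, sub_self]
  · have hyS : y S = 0 := by
      by_contra hne
      obtain ⟨-, e, -, he⟩ := hy (Finsupp.mem_support_iff.2 hne)
      exact he.not_isCritical S.2.1
    rw [Finsupp.sub_apply, hyS, sub_zero]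
    exact DFunLike.congr_fun hzw S

/-- The values of a cocycle of cohomological degree `0` on the critical states. -/
noncomputable def evalCritical (j : ℕ) : (G.Zmod 0 j).toAddSubgroup →+ (T.critical j → ℤ) :=
  AddMonoidHom.mk' (fun z S ↦ z.1 S) fun _ _ ↦ rfl

theorem evalCritical_injective (j : ℕ) :
    Function.Injective (T.evalCritical j) := by
  refine (injective_iff_map_eq_zero _).2 fun ⟨z, hz⟩ h ↦ Subtype.ext ?_
  refine eq_zero_of_mem_Zmod (T := T) hz (fun S hS ↦ ?_) fun S ⟨hdeg, e, he, _⟩ ↦ ?_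
  · by_contra hne
    have hdeg : S ∈ G.bidegree 0 j := hz.2 (Finsupp.mem_support_iff.2 hne)
    exact hne (congrFun h ⟨S, hS, hdeg.2⟩)
  · exact absurd he (by simp [Finset.card_eq_zero.1 hdeg.1])

theorem nonempty_Hmod_zero_addEquiv (j : ℕ) :
    Nonempty (G.Hmod 0 j ≃+ (T.critical j → ℤ)) := by
  have hker : AddSubgroup.comap (G.Zmod 0 j).toAddSubgroup.subtype (G.Bmod 0 j).toAddSubgroup =
      (T.evalCritical j).ker := by
    rw [(AddMonoidHom.ker_eq_bot_iff _).2 (T.evalCritical_injective j), eq_bot_iff]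
    exact fun z hz ↦ Subtype.ext hz
  have hsurj : Function.Surjective (T.evalCritical j) := fun w ↦
    have ⟨z, hz, hzw⟩ := T.exists_mem_Zmod_zero w
    ⟨⟨z, hz⟩, funext hzw⟩
  exact ⟨(QuotientAddGroup.quotientAddEquivOfEq hker).trans
    (QuotientAddGroup.quotientKerEquivOfSurjective _ hsurj)⟩

variable {T}

theorem IsCritical.colored (hS : T.IsCritical S) {v : G.V} (hv : v ≠ T.root) : Colored S v := by
  have hchild : T.child (T.childEquiv.symm ⟨v, hv⟩) = v :=
    congrArg Subtype.val (T.childEquiv.apply_symm_apply ⟨v, hv⟩)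
  exact hchild ▸ (hS _).2

theorem IsCritical.ext (hS : T.IsCritical S) (hS' : T.IsCritical S')
    (h : Colored S T.root ↔ Colored S' T.root) : S = S' := by
  refine eState_ext (hS.edges_eq_empty.trans hS'.edges_eq_empty.symm) fun v ↦ ?_
  rcases eq_or_ne v T.root with rfl | hv
  · exact h
  · exact iff_of_true (hS.colored hv) (hS'.colored hv)

theorem IsCritical.jdeg_of_colored_root (hS : T.IsCritical S) (h : Colored S T.root) :
    G.jdeg S = G.n + 1 := by
  classical
  have hall (v : G.V) : Colored S v := by
    rcases eq_or_ne v T.root with rfl | hv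
    exacts [h, hS.colored hv]
  have hequiv : {v // Colored S v} ≃ Option (Fin G.n) :=
    (Equiv.subtypeUnivEquiv hall).trans
      ((Equiv.optionSubtypeNe T.root).symm.trans T.childEquiv.symm.optionCongr)
  rw [jdeg_eq_card_colored hS.edges_eq_empty, Nat.card_congr hequiv, Nat.card_eq_fintype_card,
    Fintype.card_option, Fintype.card_fin]

theorem IsCritical.jdeg_of_not_colored_root (hS : T.IsCritical S) (h : ¬ Colored S T.root) :
    G.jdeg S = G.n := by
  have hiff (v : G.V) : Colored S v ↔ v ≠ T.root :=
    ⟨fun hv heq ↦ h (heq ▸ hv), hS.colored⟩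
  rw [jdeg_eq_card_colored hS.edges_eq_empty,
    Nat.card_congr ((Equiv.subtypeEquivRight hiff).trans T.childEquiv.symm), Nat.card_fin]

theorem IsCritical.colored_root_iff (hS : T.IsCritical S) :
    Colored S T.root ↔ G.jdeg S = G.n + 1 := by
  refine ⟨hS.jdeg_of_colored_root, fun h ↦ ?_⟩
  by_contra hroot
  exact G.n.lt_succ_self.ne ((hS.jdeg_of_not_colored_root hroot).symm.trans h)

variable (T)

theorem exists_isCritical (p : Prop) :
    ∃ S, T.IsCritical S ∧ (Colored S T.root ↔ p) := by
  have hcol {v : G.V} : Colored (spread ∅ fun v ↦ v = T.root → p) v ↔ (v = T.root → p) :=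
    ⟨fun ⟨w, hwv, hw⟩ ↦ component_empty_injective hwv ▸ hw, fun h ↦ ⟨v, rfl, h⟩⟩
  exact ⟨_, fun e ↦ ⟨Finset.notMem_empty e, hcol.2 fun h ↦ absurd h (T.childEquiv e).2⟩,
    hcol.trans (forall_prop_of_true rfl)⟩

theorem subsingleton_critical (j : ℕ) : Subsingleton (T.critical j) :=
  ⟨fun S S' ↦ Subtype.ext (S.2.1.ext S'.2.1 (by
    rw [S.2.1.colored_root_iff, S'.2.1.colored_root_iff, S.2.2, S'.2.2]))⟩

theorem nonempty_critical_iff (j : ℕ) :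
    Nonempty (T.critical j) ↔ j = G.n ∨ j = G.n + 1 := by
  constructor
  · rintro ⟨S, hS, rfl⟩
    by_cases hroot : Colored S T.root
    exacts [.inr (hS.jdeg_of_colored_root hroot), .inl (hS.jdeg_of_not_colored_root hroot)]
  · rintro (rfl | rfl)
    · obtain ⟨S, hS, hroot⟩ := T.exists_isCritical False
      exact ⟨S, hS, hS.jdeg_of_not_colored_root hroot.1⟩
    · obtain ⟨S, hS, hroot⟩ := T.exists_isCritical True
      exact ⟨S, hS, hS.jdeg_of_colored_root (hroot.2 trivial)⟩

end CriticalStates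

section Cohomology

variable {G : OGraph} {α : Type*} [LinearOrder α] {j : ℕ}

theorem nonempty_Hmod_zero_addEquiv_int (T : RootedTree G α) (hj : j = G.n ∨ j = G.n + 1) :
    Nonempty (G.Hmod 0 j ≃+ ℤ) := by
  obtain ⟨equiv⟩ := T.nonempty_Hmod_zero_addEquiv j
  have := T.subsingleton_critical j
  have := (T.nonempty_critical_iff j).2 hj
  have := uniqueOfSubsingleton (Classical.arbitrary (T.critical j))
  exact ⟨equiv.trans (AddEquiv.funUnique _ ℤ)⟩

theorem subsingleton_Hmod_zero (T : RootedTree G α) (hj : ¬ (j = G.n ∨ j = G.n + 1)) :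
    Subsingleton (G.Hmod 0 j) := by
  obtain ⟨equiv⟩ := T.nonempty_Hmod_zero_addEquiv j
  have : IsEmpty (T.critical j) := not_nonempty_iff.1 ((T.nonempty_critical_iff j).not.2 hj)
  exact equiv.subsingleton

theorem subsingleton_Hmod_succ (T : RootedTree G α) (i j : ℕ) :
    Subsingleton (G.Hmod (i + 1) j) := by
  refine QuotientAddGroup.subsingleton_iff.2 (eq_top_iff.2 fun ⟨z, hz⟩ _ ↦ ?_)
  obtain ⟨y, hy, hyz⟩ := T.exists_diff_eq_of_mem_Zmod hz
  exact ⟨y, Finsupp.supported_mono lower_subset_bidegree hy, hyz⟩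

end Cohomology

end RootedTree

end OGraph

/-- for a tree `T_n` with `n` edges (a connected graph with
`n + 1` vertices and `n` edges), `H^0(T_n) ≅ ℤ{n} ⊕ ℤ{n+1}` and `H^i(T_n) = 0`
for `i ≠ 0`: the degree-`n` and degree-`(n+1)` parts of `H^0` are each `ℤ`, all
other bigraded pieces vanish. -/
theorem cohomology_tree (G : OGraph) (hcard : Fintype.card G.V = G.n + 1)
    (hconn : Subsingleton (G.Comp Finset.univ)) :
    Nonempty (G.Hmod 0 G.n ≃+ ℤ) ∧
    Nonempty (G.Hmod 0 (G.n + 1) ≃+ ℤ) ∧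
    (∀ j : ℕ, j ≠ G.n → j ≠ G.n + 1 → Subsingleton (G.Hmod 0 j)) ∧
    (∀ i : ℕ, i ≠ 0 → ∀ j : ℕ, Subsingleton (G.Hmod i j)) := by
  obtain ⟨T⟩ := OGraph.nonempty_rootedTree hcard hconn
  refine ⟨T.nonempty_Hmod_zero_addEquiv_int (.inl rfl),
    T.nonempty_Hmod_zero_addEquiv_int (.inr rfl),
    fun j hn hn' ↦ T.subsingleton_Hmod_zero (not_or_intro hn hn'), fun i hi j ↦ ?_⟩
  obtain ⟨i, rfl⟩ := Nat.exists_eq_succ_of_ne_zero hi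
  exact T.subsingleton_Hmod_succ i j
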